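/- Norm bound for the map α on positive semidefinite matrices: for every m×m real symmetric positive semidefinite matrix Λ, the spectral norm of the n×n symmetric matrix α(Λ) satisfies ‖α(Λ)‖ ≤ ‖p‖₂ · tr(Λ). -/

import Mathlib

/-! The matrix `α` is linear in `Λ`, and `α(bbᵀ)` is the matrix `M(b)` with entries `bᵀ Lᵢⱼ b`.
Factor `Λ = BᵀB`, so that `Λ` is the sum of the rank-one matrices `bₖ bₖᵀ` over the rows `bₖ` of
`B` and `tr Λ = ∑ₖ ‖bₖ‖²`. Since `M` is homogeneous of degree two,
`‖M(bₖ) v‖ ≤ ‖p‖₂ ‖bₖ‖²` for unit `v` (`vecNorm_quadMat_mulVec_le`), and the triangle inequality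
gives the bound. The norms are real suprema, so this also needs the sets involved to be bounded
above; the Frobenius norm supplies the bounds. -/

open Matrix

noncomputable section

/-- Euclidean (ℓ₂) norm of a finite real vector. -/
def vecNorm {k : ℕ} (u : Fin k → ℝ) : ℝ := Real.sqrt (∑ i, u i ^ 2)

/-- The matrix pencil `p(x, X) = F₀ + ∑ₖ xₖ Kₖ + ∑ᵢ ∑ⱼ Xᵢⱼ Lᵢⱼ`. -/
def pencil {n m : ℕ} (F0 : Matrix (Fin m) (Fin m) ℝ)
    (K : Fin n → Matrix (Fin m) (Fin m) ℝ)
    (L : Fin n → Fin n → Matrix (Fin m) (Fin m) ℝ)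
    (x : Fin n → ℝ) (X : Matrix (Fin n) (Fin n) ℝ) : Matrix (Fin m) (Fin m) ℝ :=
  F0 + ∑ k, x k • K k + ∑ i, ∑ j, X i j • L i j

/-- Negative semidefinite real matrix. -/
def NegSemidef' {k : ℕ} (A : Matrix (Fin k) (Fin k) ℝ) : Prop := (-A).PosSemidef

/-- Negative definite real matrix. -/
def NegDef' {k : ℕ} (A : Matrix (Fin k) (Fin k) ℝ) : Prop := (-A).PosDef

/-- The BMI feasible set `F = {x : p(x, xxᵀ) ⪯ 0}`. -/
def feasSet {n m : ℕ} (F0 : Matrix (Fin m) (Fin m) ℝ)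
    (K : Fin n → Matrix (Fin m) (Fin m) ℝ)
    (L : Fin n → Fin n → Matrix (Fin m) (Fin m) ℝ) : Set (Fin n → ℝ) :=
  {x | NegSemidef' (pencil F0 K L x (vecMulVec x x))}

/-- Feasibility distance `d_F(x) = inf {‖x − a‖₂ : a ∈ F}`. -/
def distF {n m : ℕ} (F0 : Matrix (Fin m) (Fin m) ℝ)
    (K : Fin n → Matrix (Fin m) (Fin m) ℝ)
    (L : Fin n → Fin n → Matrix (Fin m) (Fin m) ℝ) (x : Fin n → ℝ) : ℝ :=
  sInf {r | ∃ a ∈ feasSet F0 K L, r = vecNorm (x - a)}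

/-- `δₖ(x) = 2 ∑ᵢ xᵢ L_{k i}`. -/
def deltaMat {n m : ℕ} (L : Fin n → Fin n → Matrix (Fin m) (Fin m) ℝ)
    (k : Fin n) (x : Fin n → ℝ) : Matrix (Fin m) (Fin m) ℝ :=
  (2 : ℝ) • ∑ i, x i • L k i

/-- The MFCQ condition at a point `x`. -/
def MFCQ {n m : ℕ} (F0 : Matrix (Fin m) (Fin m) ℝ)
    (K : Fin n → Matrix (Fin m) (Fin m) ℝ)
    (L : Fin n → Fin n → Matrix (Fin m) (Fin m) ℝ) (x : Fin n → ℝ) : Prop :=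
  ∃ b : Fin n → ℝ,
    NegDef' (pencil F0 K L x (vecMulVec x x) + ∑ k, b k • (K k + deltaMat L k x))

/-- Smallest eigenvalue of a symmetric real matrix, via the Rayleigh quotient. -/
def lambdaMin {k : ℕ} (A : Matrix (Fin k) (Fin k) ℝ) : ℝ :=
  sInf {r | ∃ u : Fin k → ℝ, vecNorm u = 1 ∧ r = u ⬝ᵥ (A *ᵥ u)}

/-- The G-MFCQ function `s(x)`. -/
def sFun {n m : ℕ} (K : Fin n → Matrix (Fin m) (Fin m) ℝ)
    (L : Fin n → Fin n → Matrix (Fin m) (Fin m) ℝ) (x : Fin n → ℝ) : ℝ :=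
  sSup {r | ∃ b : Fin n → ℝ, vecNorm b = 1 ∧
    r = lambdaMin (-(∑ k, b k • (K k + deltaMat L k x)))}

/-- Spectral norm of a real matrix. -/
def specNorm {k : ℕ} (A : Matrix (Fin k) (Fin k) ℝ) : ℝ :=
  sSup {r | ∃ v : Fin k → ℝ, vecNorm v = 1 ∧ r = vecNorm (A *ᵥ v)}

/-- Pencil norm `‖p‖₂`. -/
def pencilNorm {n m : ℕ} (L : Fin n → Fin n → Matrix (Fin m) (Fin m) ℝ) : ℝ :=
  sSup {r | ∃ u : Fin m → ℝ, vecNorm u = 1 ∧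
    r = specNorm (Matrix.of fun i j => u ⬝ᵥ (L i j *ᵥ u))}

/-- Cone `C₁`: positive semidefinite matrices. -/
def coneC1 (n : ℕ) : Set (Matrix (Fin n) (Fin n) ℝ) := {H | H.PosSemidef}

/-- Cone `C₂`: symmetric matrices with `Hᵢᵢ ≥ 0` and `Hᵢᵢ Hⱼⱼ ≥ Hᵢⱼ²`. -/
def coneC2 (n : ℕ) : Set (Matrix (Fin n) (Fin n) ℝ) :=
  {H | H.IsSymm ∧ ∀ i j, 0 ≤ H i i ∧ H i j ^ 2 ≤ H i i * H j j}

/-- Cone `C₃`: symmetric matrices with `Hᵢᵢ ≥ 0` and `Hᵢᵢ + Hⱼⱼ ≥ 2|Hᵢⱼ|`. -/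
def coneC3 (n : ℕ) : Set (Matrix (Fin n) (Fin n) ℝ) :=
  {H | H.IsSymm ∧ ∀ i j, 0 ≤ H i i ∧ 2 * |H i j| ≤ H i i + H j j}

/-- Dual cone with respect to the trace inner product. -/
def dualCone {n : ℕ} (C : Set (Matrix (Fin n) (Fin n) ℝ)) :
    Set (Matrix (Fin n) (Fin n) ℝ) :=
  {Y | Y.IsSymm ∧ ∀ H ∈ C, 0 ≤ (Y * H).trace}

/-- `α(Λ)` : the n×n matrix with entries `⟨Lᵢⱼ, Λ⟩ = tr(Lᵢⱼ Λ)`. -/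
def alphaMat {n m : ℕ} (L : Fin n → Fin n → Matrix (Fin m) (Fin m) ℝ)
    (Λ : Matrix (Fin m) (Fin m) ℝ) : Matrix (Fin n) (Fin n) ℝ :=
  Matrix.of fun i j => (L i j * Λ).trace

/-- Objective of the penalized problem `(P_η)`. -/
def penObj {n : ℕ} (c xc : Fin n → ℝ) (η : ℝ) (x : Fin n → ℝ) : ℝ :=
  c ⬝ᵥ x + η * vecNorm (x - xc) ^ 2

/-- `x` is an optimal solution of the penalized problem `(P_η)`. -/
def IsOptPen {n m : ℕ} (F0 : Matrix (Fin m) (Fin m) ℝ)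
    (K : Fin n → Matrix (Fin m) (Fin m) ℝ)
    (L : Fin n → Fin n → Matrix (Fin m) (Fin m) ℝ)
    (c xc : Fin n → ℝ) (η : ℝ) (x : Fin n → ℝ) : Prop :=
  x ∈ feasSet F0 K L ∧ ∀ y ∈ feasSet F0 K L, penObj c xc η x ≤ penObj c xc η y

/-- Objective of the penalized convex relaxation `(R_{η,C})`. -/
def relObj {n : ℕ} (c xc : Fin n → ℝ) (η : ℝ) (x : Fin n → ℝ)
    (X : Matrix (Fin n) (Fin n) ℝ) : ℝ :=
  c ⬝ᵥ x + η * (X.trace - 2 * (xc ⬝ᵥ x) + xc ⬝ᵥ xc)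

/-- Feasibility for the relaxation with cone `C`. -/
def RelFeasible {n m : ℕ} (F0 : Matrix (Fin m) (Fin m) ℝ)
    (K : Fin n → Matrix (Fin m) (Fin m) ℝ)
    (L : Fin n → Fin n → Matrix (Fin m) (Fin m) ℝ)
    (C : Set (Matrix (Fin n) (Fin n) ℝ))
    (x : Fin n → ℝ) (X : Matrix (Fin n) (Fin n) ℝ) : Prop :=
  X.IsSymm ∧ NegSemidef' (pencil F0 K L x X) ∧ X - vecMulVec x x ∈ C

/-- `(x, X)` is an optimal solution of the penalized convex relaxation `(R_{η,C})`. -/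
def IsOptRel {n m : ℕ} (F0 : Matrix (Fin m) (Fin m) ℝ)
    (K : Fin n → Matrix (Fin m) (Fin m) ℝ)
    (L : Fin n → Fin n → Matrix (Fin m) (Fin m) ℝ)
    (c xc : Fin n → ℝ) (η : ℝ) (C : Set (Matrix (Fin n) (Fin n) ℝ))
    (x : Fin n → ℝ) (X : Matrix (Fin n) (Fin n) ℝ) : Prop :=
  RelFeasible F0 K L C x X ∧
    ∀ y Y, RelFeasible F0 K L C y Y → relObj c xc η x X ≤ relObj c xc η y Y

/-- The KKT conditions for `(P_η)` at `(x, Λ)`. -/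
def KKT {n m : ℕ} (F0 : Matrix (Fin m) (Fin m) ℝ)
    (K : Fin n → Matrix (Fin m) (Fin m) ℝ)
    (L : Fin n → Fin n → Matrix (Fin m) (Fin m) ℝ)
    (c xc : Fin n → ℝ) (η : ℝ)
    (x : Fin n → ℝ) (Λ : Matrix (Fin m) (Fin m) ℝ) : Prop :=
  Λ.IsSymm ∧ Λ.PosSemidef ∧
  c + (2 * η) • (x - xc) + (∑ k, ((K k * Λ).trace) • (Pi.single k 1 : Fin n → ℝ))
      + (2 : ℝ) • (alphaMat L Λ *ᵥ x) = 0 ∧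
  Λ * pencil F0 K L x (vecMulVec x x) = 0

/-- `M(u)`, the matrix with entries `uᵀ Lᵢⱼ u`. -/
def quadMat {n m : ℕ} (L : Fin n → Fin n → Matrix (Fin m) (Fin m) ℝ) (u : Fin m → ℝ) :
    Matrix (Fin n) (Fin n) ℝ :=
  Matrix.of fun i j => u ⬝ᵥ (L i j *ᵥ u)

lemma vecNorm_nonneg {k : ℕ} (u : Fin k → ℝ) : 0 ≤ vecNorm u := Real.sqrt_nonneg _

lemma vecNorm_sq {k : ℕ} (u : Fin k → ℝ) : vecNorm u ^ 2 = ∑ i, u i ^ 2 :=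
  Real.sq_sqrt (Finset.sum_nonneg fun _ _ => sq_nonneg _)

lemma vecNorm_eq_norm {k : ℕ} (u : Fin k → ℝ) : vecNorm u = ‖WithLp.toLp 2 u‖ := by
  simp [vecNorm, EuclideanSpace.norm_eq]

lemma vecNorm_smul {k : ℕ} (c : ℝ) (u : Fin k → ℝ) : vecNorm (c • u) = |c| * vecNorm u := by
  rw [vecNorm_eq_norm, vecNorm_eq_norm, WithLp.toLp_smul, norm_smul, Real.norm_eq_abs]

lemma vecNorm_sum_le {k : ℕ} {ι : Type*} (s : Finset ι) (f : ι → Fin k → ℝ) :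
    vecNorm (∑ a ∈ s, f a) ≤ ∑ a ∈ s, vecNorm (f a) := by
  simp only [vecNorm_eq_norm, WithLp.toLp_sum]
  exact norm_sum_le _ _

/-- The squared Frobenius norm bounds the squared operator norm. -/
lemma vecNorm_mulVec_sq_le {k : ℕ} (A : Matrix (Fin k) (Fin k) ℝ) (v : Fin k → ℝ) :
    vecNorm (A *ᵥ v) ^ 2 ≤ (∑ i, ∑ j, A i j ^ 2) * vecNorm v ^ 2 := by
  rw [vecNorm_sq, vecNorm_sq, Finset.sum_mul]
  exact Finset.sum_le_sum fun i _ => Finset.sum_mul_sq_le_sq_mul_sq Finset.univ (A i) v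

lemma vecNorm_mulVec_le_sqrt {k : ℕ} (A : Matrix (Fin k) (Fin k) ℝ) (v : Fin k → ℝ)
    (hv : vecNorm v = 1) : vecNorm (A *ᵥ v) ≤ √(∑ i, ∑ j, A i j ^ 2) := by
  apply Real.le_sqrt_of_sq_le
  simpa [hv] using vecNorm_mulVec_sq_le A v

lemma specNorm_le_sqrt {k : ℕ} (A : Matrix (Fin k) (Fin k) ℝ) :
    specNorm A ≤ √(∑ i, ∑ j, A i j ^ 2) := by
  refine Real.sSup_le ?_ (Real.sqrt_nonneg _)
  rintro r ⟨v, hv, rfl⟩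
  exact vecNorm_mulVec_le_sqrt A v hv

lemma vecNorm_mulVec_le_specNorm {k : ℕ} (A : Matrix (Fin k) (Fin k) ℝ) (v : Fin k → ℝ)
    (hv : vecNorm v = 1) : vecNorm (A *ᵥ v) ≤ specNorm A := by
  refine le_csSup ⟨√(∑ i, ∑ j, A i j ^ 2), ?_⟩ ⟨v, hv, rfl⟩
  rintro r ⟨w, hw, rfl⟩
  exact vecNorm_mulVec_le_sqrt A w hw

lemma quadMat_sq_le {n m : ℕ} (L : Fin n → Fin n → Matrix (Fin m) (Fin m) ℝ)
    (u : Fin m → ℝ) (hu : vecNorm u = 1) (i j : Fin n) :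
    quadMat L u i j ^ 2 ≤ ∑ a, ∑ b, L i j a b ^ 2 := by
  have h1 : quadMat L u i j ^ 2 ≤ (∑ a, u a ^ 2) * ∑ a, (L i j *ᵥ u) a ^ 2 :=
    Finset.sum_mul_sq_le_sq_mul_sq Finset.univ u (L i j *ᵥ u)
  have h2 := vecNorm_mulVec_sq_le (L i j) u
  rw [← vecNorm_sq, ← vecNorm_sq] at h1
  rw [hu] at h1 h2
  linarith

lemma specNorm_quadMat_le_pencilNorm {n m : ℕ}
    (L : Fin n → Fin n → Matrix (Fin m) (Fin m) ℝ) (u : Fin m → ℝ) (hu : vecNorm u = 1) :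
    specNorm (quadMat L u) ≤ pencilNorm L := by
  refine le_csSup ⟨√(∑ i, ∑ j, ∑ a, ∑ b, L i j a b ^ 2), ?_⟩ ⟨u, hu, rfl⟩
  rintro r ⟨w, hw, rfl⟩
  refine (specNorm_le_sqrt _).trans (Real.sqrt_le_sqrt ?_)
  exact Finset.sum_le_sum fun i _ => Finset.sum_le_sum fun j _ => quadMat_sq_le L w hw i j

lemma pencilNorm_nonneg {n m : ℕ} (L : Fin n → Fin n → Matrix (Fin m) (Fin m) ℝ) :
    0 ≤ pencilNorm L := by
  refine Real.sSup_nonneg ?_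
  rintro r ⟨u, -, rfl⟩
  refine Real.sSup_nonneg ?_
  rintro r ⟨v, -, rfl⟩
  exact vecNorm_nonneg _

lemma quadMat_smul {n m : ℕ} (L : Fin n → Fin n → Matrix (Fin m) (Fin m) ℝ)
    (c : ℝ) (u : Fin m → ℝ) : quadMat L (c • u) = c ^ 2 • quadMat L u := by
  ext i j
  simp only [quadMat, Matrix.of_apply, Matrix.smul_apply, mulVec_smul, dotProduct_smul,
    smul_dotProduct, smul_eq_mul]
  ring

/-- The defining bound of the pencil norm, extended from unit `u` to all `u` by homogeneity. -/
lemma vecNorm_quadMat_mulVec_le {n m : ℕ} (L : Fin n → Fin n → Matrix (Fin m) (Fin m) ℝ)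
    (u : Fin m → ℝ) (v : Fin n → ℝ) (hv : vecNorm v = 1) :
    vecNorm (quadMat L u *ᵥ v) ≤ pencilNorm L * vecNorm u ^ 2 := by
  -- Every nonzero `u` is a multiple `c • w` of a unit vector `w`.
  have key : ∀ (c : ℝ) (w : Fin m → ℝ), vecNorm w = 1 →
      vecNorm (quadMat L (c • w) *ᵥ v) ≤ pencilNorm L * vecNorm (c • w) ^ 2 := by
    intro c w hw
    rw [quadMat_smul, smul_mulVec, vecNorm_smul, vecNorm_smul, hw, mul_one, sq_abs,
      abs_of_nonneg (sq_nonneg c), mul_comm]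
    exact mul_le_mul_of_nonneg_right ((vecNorm_mulVec_le_specNorm _ v hv).trans
      (specNorm_quadMat_le_pencilNorm L w hw)) (sq_nonneg c)
  rcases eq_or_ne (vecNorm u) 0 with h0 | h0
  · have hu : u = 0 := by
      rw [vecNorm_eq_norm, norm_eq_zero] at h0
      simpa using h0
    subst hu
    have hz : quadMat L (0 : Fin m → ℝ) = 0 := by
      ext i j
      simp [quadMat]
    simp [hz, vecNorm]
  · have hw : vecNorm ((vecNorm u)⁻¹ • u) = 1 := by
      rw [vecNorm_smul, abs_of_nonneg (inv_nonneg.2 (vecNorm_nonneg u)), inv_mul_cancel₀ h0]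
    have := key (vecNorm u) _ hw
    rwa [smul_inv_smul₀ h0] at this

lemma alphaMat_transpose_mul_self {n m : ℕ} (L : Fin n → Fin n → Matrix (Fin m) (Fin m) ℝ)
    (B : Matrix (Fin m) (Fin m) ℝ) : alphaMat L (Bᵀ * B) = ∑ k, quadMat L (B k) := by
  ext i j
  rw [Matrix.sum_apply]
  simp only [alphaMat, quadMat, Matrix.of_apply]
  -- By cyclicity, `tr(Lᵢⱼ BᵀB) = tr(B Lᵢⱼ Bᵀ)`, whose diagonal entries are `bₖᵀ Lᵢⱼ bₖ`.
  rw [← Matrix.mul_assoc, Matrix.trace_mul_comm]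
  rfl

lemma trace_transpose_mul_self_eq {m : ℕ} (B : Matrix (Fin m) (Fin m) ℝ) :
    (Bᵀ * B).trace = ∑ k, vecNorm (B k) ^ 2 := by
  rw [Matrix.trace_mul_comm]
  simp only [Matrix.trace, Matrix.diag_apply, Matrix.mul_apply, Matrix.transpose_apply,
    vecNorm_sq, pow_two (B _ _)]

theorem bmi_alpha_norm_bound {n m : ℕ} (hn : 0 < n) (hm : 0 < m)
    (L : Fin n → Fin n → Matrix (Fin m) (Fin m) ℝ)
    (hL : ∀ i j, (L i j).IsSymm) (hLsy : ∀ i j, L i j = L j i)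
    (Λ : Matrix (Fin m) (Fin m) ℝ) (hΛ : Λ.PosSemidef) :
    specNorm (alphaMat L Λ) ≤ pencilNorm L * Λ.trace := by
  obtain ⟨B, hB⟩ : ∃ B : Matrix (Fin m) (Fin m) ℝ, Λ = Bᵀ * B := by
    open scoped MatrixOrder in
    obtain ⟨B, hB⟩ := CStarAlgebra.nonneg_iff_eq_star_mul_self.mp hΛ.nonneg
    exact ⟨B, by simpa [star_eq_conjTranspose] using hB⟩
  refine Real.sSup_le ?_ (mul_nonneg (pencilNorm_nonneg L) hΛ.trace_nonneg)
  rintro r ⟨v, hv, rfl⟩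
  rw [hB, alphaMat_transpose_mul_self, trace_transpose_mul_self_eq, sum_mulVec, Finset.mul_sum]
  exact (vecNorm_sum_le _ _).trans
    (Finset.sum_le_sum fun k _ => vecNorm_quadMat_mulVec_le L (B k) v hv)
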